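/- Let r ≥ 1 be an integer and let G be a finite simple graph. If rankwidth(G) ≥ 72r, then G contains an induced subgraph H with min-bal-cutrank(H) ≥ r. -/

import Mathlib

open Classical

/-- The cutrank of a pair of vertex sets `X`, `Y` in a graph `G`:
the rank over `𝔽₂` of the `X × Y` biadjacency matrix. -/
noncomputable def cutrank {V : Type*} (G : SimpleGraph V) (X Y : Finset V) : ℕ :=
  Matrix.rank (Matrix.of fun (x : X) (y : Y) => if G.Adj x.1 y.1 then (1 : ZMod 2) else 0)

/-- `(X, Y)` is a balanced partition of the vertex set `S`:
`X ⊔ Y = S` and both parts have size at most `(2/3)|S|`. -/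
def IsBalancedPartitionOf {V : Type*} (S X Y : Finset V) : Prop :=
  X ∪ Y = S ∧ Disjoint X Y ∧ 3 * X.card ≤ 2 * S.card ∧ 3 * Y.card ≤ 2 * S.card

/-- The minimum balanced cutrank of the induced subgraph `G[S]`:
the minimum of `cutrank G X Y` over balanced partitions `(X, Y)` of `S`.
(For `X, Y ⊆ S`, the biadjacency matrix in `G[S]` coincides with that in `G`.) -/
noncomputable def minBalCutrank {V : Type*} (G : SimpleGraph V) (S : Finset V) : ℕ :=
  sInf {k | ∃ X Y : Finset V, IsBalancedPartitionOf S X Y ∧ cutrank G X Y = k}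

/-- A rank-decomposition of a graph on vertex type `V`: a subcubic tree
together with a bijection from `V` to the leaves (degree-1 vertices) of the tree. -/
structure RankDecomp (V : Type*) [Fintype V] where
  n : ℕ
  tree : SimpleGraph (Fin n)
  isTree : tree.IsTree
  subcubic : ∀ t : Fin n, tree.degree t ≤ 3
  leaf : V → Fin n
  leafDeg : ∀ v : V, tree.degree (leaf v) = 1
  leafInj : Function.Injective leaf
  leafSurj : ∀ t : Fin n, tree.degree t = 1 → ∃ v : V, leaf v = t

/-- The side of the edge `{u, v}` of the decomposition tree containing `u`:
all vertices of `G` whose leaf lies in the component of `u` after deleting the edge. -/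
noncomputable def RankDecomp.side {V : Type*} [Fintype V] (d : RankDecomp V) (u v : Fin d.n) :
    Finset V :=
  Finset.univ.filter fun x => (d.tree.deleteEdges {s(u, v)}).Reachable (d.leaf x) u

/-- The decomposition `d` has width at most `k` for the graph `G`: every edge of the
tree induces a partition of the vertices of cutrank at most `k`. -/
def RankDecomp.widthLE {V : Type*} [Fintype V] (G : SimpleGraph V) (d : RankDecomp V) (k : ℕ) :
    Prop :=
  ∀ u v : Fin d.n, d.tree.Adj u v → cutrank G (d.side u v) (d.side v u) ≤ k

/-- The rankwidth of `G`: the minimum width of a rank-decomposition of `G`. -/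
noncomputable def rankwidth {V : Type*} [Fintype V] (G : SimpleGraph V) : ℕ :=
  sInf {k | ∃ d : RankDecomp V, RankDecomp.widthLE G d k}

/-!
Suppose that every vertex set `S` has a balanced partition of rank less than `r`. If the rankwidth
exceeds `57 * r`, then there is a well-linked set `W` of `57 * r` vertices: otherwise every vertex
set whose cut has rank at most `57 * r` could be split in two with such cuts again, and the Hasse
diagram of the resulting laminar family would be a rank-decomposition of width `57 * r`. Because of
`W`, a cut of rank less than `19 * r` has exactly one big side. Let `B` be a smallest big side of
cuts of rank at most `18 * r`. Balanced partitions shrink any big side geometrically at a cost of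
`r` per step, so big sides of cuts of rank at most `12 * r` are more than `11` times as large as
`B`. This leaves room outside `B` for a set `Z` with at least `8` times as many vertices that
determines the rank of the cut at `B` and is attached to `B` so firmly that whenever a balanced
partition `(X, Y)` of `B ∪ Z` has rank less than `r`, the cuts at `X ∩ B` and `Y ∩ B` have smaller
rank than the cut at `B`. But one of these two sets is a big side, contradicting the choice of `B`.
-/

section SubmatrixRank

variable {K E F₁ F₂ P Q : Type*} [Field K] [AddCommGroup E] [Module K E] [AddCommGroup F₁]
  [Module K F₁] [AddCommGroup F₂] [Module K F₂] [AddCommGroup P] [Module K P] [AddCommGroup Q]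
  [Module K Q]

theorem finrank_map_add_finrank_inf_ker (f : E →ₗ[K] F₁) (R : Submodule K E)
    [FiniteDimensional K R] :
    Module.finrank K (R.map f) + Module.finrank K ↥(R ⊓ LinearMap.ker f) = Module.finrank K R := by
  have h := (f.domRestrict R).finrank_range_add_finrank_ker
  rw [LinearMap.range_domRestrict, LinearMap.ker_domRestrict] at h
  rwa [← Submodule.map_comap_subtype, Submodule.finrank_map_subtype_eq]

theorem finrank_map_inf_add_finrank_map_sup_le (R₁ R₂ : Submodule K E) [FiniteDimensional K R₁]
    [FiniteDimensional K R₂] {f₁ : E →ₗ[K] F₁} {f₂ : E →ₗ[K] F₂} {p : E →ₗ[K] P} {q : E →ₗ[K] Q}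
    (hp : LinearMap.ker f₁ ⊓ LinearMap.ker f₂ ≤ LinearMap.ker p)
    (hq : LinearMap.ker f₁ ⊔ LinearMap.ker f₂ ≤ LinearMap.ker q) :
    Module.finrank K ((R₁ ⊓ R₂).map p) + Module.finrank K ((R₁ ⊔ R₂).map q) ≤
      Module.finrank K (R₁.map f₁) + Module.finrank K (R₂.map f₂) := by
  have h_inf : (R₁ ⊓ LinearMap.ker f₁) ⊓ (R₂ ⊓ LinearMap.ker f₂) ≤ (R₁ ⊓ R₂) ⊓ LinearMap.ker p :=
    inf_inf_inf_comm R₁ _ R₂ _ ▸ inf_le_inf_left _ hp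
  have h_sup : (R₁ ⊓ LinearMap.ker f₁) ⊔ (R₂ ⊓ LinearMap.ker f₂) ≤ (R₁ ⊔ R₂) ⊓ LinearMap.ker q :=
    sup_le (inf_le_inf le_sup_left (le_sup_left.trans hq))
      (inf_le_inf le_sup_right (le_sup_right.trans hq))
  have := Submodule.finrank_mono h_inf
  have := Submodule.finrank_mono h_sup
  have := Submodule.finrank_sup_add_finrank_inf_eq R₁ R₂
  have := Submodule.finrank_sup_add_finrank_inf_eq (R₁ ⊓ LinearMap.ker f₁) (R₂ ⊓ LinearMap.ker f₂)
  have := finrank_map_add_finrank_inf_ker f₁ R₁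
  have := finrank_map_add_finrank_inf_ker f₂ R₂
  have := finrank_map_add_finrank_inf_ker p (R₁ ⊓ R₂)
  have := finrank_map_add_finrank_inf_ker q (R₁ ⊔ R₂)
  omega

variable {m n : Type*}

theorem rank_submatrix_eq_finrank_map (A : Matrix m n K) (X : Finset m) (Y : Finset n) :
    (A.submatrix ((↑) : X → m) ((↑) : Y → n)).rank = Module.finrank K
      ((Submodule.span K (A.row '' X)).map (LinearMap.funLeft K K ((↑) : Y → n))) := by
  rw [Matrix.rank_eq_finrank_span_row, Submodule.map_span, ← Set.image_comp, Set.image_eq_range]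
  rfl

theorem ker_funLeft_subtype_anti {Y Y' : Finset n} (h : Y ⊆ Y') :
    LinearMap.ker (LinearMap.funLeft K K ((↑) : Y' → n)) ≤
      LinearMap.ker (LinearMap.funLeft K K ((↑) : Y → n)) :=
  fun _ hu ↦ funext fun y ↦ congrFun hu ⟨y, h y.2⟩

theorem rank_submatrix_inter_union_add_le [DecidableEq m] [DecidableEq n] (A : Matrix m n K)
    (X₁ X₂ : Finset m) (Y₁ Y₂ : Finset n) :
    (A.submatrix ((↑) : ↥(X₁ ∩ X₂) → m) ((↑) : ↥(Y₁ ∪ Y₂) → n)).rank +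
        (A.submatrix ((↑) : ↥(X₁ ∪ X₂) → m) ((↑) : ↥(Y₁ ∩ Y₂) → n)).rank ≤
      (A.submatrix ((↑) : X₁ → m) ((↑) : Y₁ → n)).rank +
        (A.submatrix ((↑) : X₂ → m) ((↑) : Y₂ → n)).rank := by
  have fin (X : Finset m) : FiniteDimensional K (Submodule.span K (A.row '' X)) :=
    .span_of_finite K (X.finite_toSet.image _)
  have h_union : Submodule.span K (A.row '' ↑(X₁ ∪ X₂)) =
      Submodule.span K (A.row '' X₁) ⊔ Submodule.span K (A.row '' X₂) := by
    rw [Finset.coe_union, Set.image_union, Submodule.span_union]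
  have h_inter : Submodule.span K (A.row '' ↑(X₁ ∩ X₂)) ≤
      Submodule.span K (A.row '' X₁) ⊓ Submodule.span K (A.row '' X₂) :=
    le_inf (Submodule.span_mono <| Set.image_mono <| by simp)
      (Submodule.span_mono <| Set.image_mono <| by simp)
  rw [rank_submatrix_eq_finrank_map, rank_submatrix_eq_finrank_map, rank_submatrix_eq_finrank_map,
    rank_submatrix_eq_finrank_map, h_union]
  refine (add_le_add_left (Submodule.finrank_mono <| Submodule.map_mono h_inter) _).trans <|
    finrank_map_inf_add_finrank_map_sup_le _ _ (fun u hu ↦ funext ?_)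
      (sup_le (ker_funLeft_subtype_anti Finset.inter_subset_left)
        (ker_funLeft_subtype_anti Finset.inter_subset_right))
  rintro ⟨y, hy⟩
  exact (Finset.mem_union.1 hy).elim (fun h ↦ congrFun hu.1 ⟨y, h⟩) (fun h ↦ congrFun hu.2 ⟨y, h⟩)

end SubmatrixRank

section Cutrank

variable {V : Type*} (G : SimpleGraph V)

theorem cutrank_comm (X Y : Finset V) : cutrank G X Y = cutrank G Y X := by
  rw [cutrank, cutrank, ← Matrix.rank_transpose]
  congr 1
  ext y x
  simp [G.adj_comm]

theorem cutrank_inter_union_add_le (X₁ Y₁ X₂ Y₂ : Finset V) :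
    cutrank G (X₁ ∩ X₂) (Y₁ ∪ Y₂) + cutrank G (X₁ ∪ X₂) (Y₁ ∩ Y₂) ≤
      cutrank G X₁ Y₁ + cutrank G X₂ Y₂ :=
  rank_submatrix_inter_union_add_le (G.adjMatrix (ZMod 2)) X₁ X₂ Y₁ Y₂

theorem cutrank_mono {X X' Y Y' : Finset V} (hX : X ⊆ X') (hY : Y ⊆ Y') :
    cutrank G X Y ≤ cutrank G X' Y' :=
  Matrix.rank_submatrix_le (Matrix.of fun (x : X') (y : Y') ↦ if G.Adj x y then (1 : ZMod 2) else 0)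
    (Set.inclusion hX) (Set.inclusion hY)

theorem cutrank_le_card_left (X Y : Finset V) : cutrank G X Y ≤ X.card :=
  (Matrix.rank_le_card_height _).trans_eq (Fintype.card_coe X)

theorem cutrank_empty_left (Y : Finset V) : cutrank G ∅ Y = 0 :=
  Nat.le_zero.1 (cutrank_le_card_left G ∅ Y)

theorem cutrank_union_left_le (X X' Y : Finset V) :
    cutrank G (X ∪ X') Y ≤ cutrank G X Y + cutrank G X' Y := by
  have := cutrank_inter_union_add_le G X Y X' Y
  rw [Finset.union_self, Finset.inter_self] at this
  omega

theorem cutrank_union_right_le (X Y Y' : Finset V) :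
    cutrank G X (Y ∪ Y') ≤ cutrank G X Y + cutrank G X Y' := by
  simpa only [cutrank_comm G X] using cutrank_union_left_le G Y Y' X

theorem cutrank_add_cutrank_le_union_add (X X' Y Y' : Finset V) :
    cutrank G X Y + cutrank G X' Y' ≤ cutrank G (X ∪ X') (Y ∪ Y') + cutrank G X Y' := by
  refine le_trans ?_ (cutrank_inter_union_add_le G (X ∪ X') (Y ∪ Y') X Y')
  exact add_le_add (cutrank_mono G (by grind) (by grind)) (cutrank_mono G (by grind) (by grind))

theorem cutrank_insert_add_le {T U Y Z : Finset V} (hUT : U ⊆ T) (hZY : Z ⊆ Y) (v : V) :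
    cutrank G (insert v T) Z + cutrank G U Y ≤ cutrank G (insert v U) Y + cutrank G T Z := by
  rw [add_comm]
  refine le_trans ?_ (cutrank_inter_union_add_le G (insert v U) Y T Z)
  exact add_le_add (cutrank_mono G (by grind) (by grind)) (cutrank_mono G (by grind) (by grind))

theorem cutrank_union_le_of_forall_insert_le {T A Y : Finset V}
    (h : ∀ v ∈ A, cutrank G (insert v T) Y ≤ cutrank G T Y) :
    cutrank G (T ∪ A) Y ≤ cutrank G T Y := by
  induction A using Finset.induction_on with
  | empty => simp
  | insert a A _ ih =>
    have hA := ih fun v hv ↦ h v (Finset.mem_insert_of_mem hv)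
    have ha := h a (Finset.mem_insert_self a A)
    have := cutrank_insert_add_le G (Finset.subset_union_left (s₁ := T) (s₂ := A)) subset_rfl
      (Z := Y) a
    rw [Finset.union_insert]
    omega

theorem exists_subset_cutrank_eq_card (A Y : Finset V) :
    ∃ Z ⊆ A, cutrank G Z Y = Z.card ∧ cutrank G Z Y = cutrank G A Y := by
  obtain ⟨Z, hZ, hmax⟩ := (A.powerset.filter fun Z ↦ cutrank G Z Y = Z.card).exists_max_image
    Finset.card ⟨∅, by simp [cutrank_empty_left]⟩
  simp only [Finset.mem_filter, Finset.mem_powerset] at hZ hmax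
  refine ⟨Z, hZ.1, hZ.2, (cutrank_mono G hZ.1 subset_rfl).antisymm ?_⟩
  refine (cutrank_mono G Finset.subset_union_right subset_rfl).trans
    (cutrank_union_le_of_forall_insert_le G (T := Z) fun v hv ↦ ?_)
  by_contra! hlt
  have hvZ : v ∉ Z := fun h ↦ by simp [Finset.insert_eq_of_mem h] at hlt
  have hcard := Finset.card_insert_of_notMem hvZ
  have hle := cutrank_le_card_left G (insert v Z) Y
  have := hmax (insert v Z) ⟨Finset.insert_subset hv hZ.1, by omega⟩
  omega

theorem cutrank_eq_card_of_subset {X Z Y : Finset V} (hZ : cutrank G Z Y = Z.card) (hXZ : X ⊆ Z) :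
    cutrank G X Y = X.card := by
  have h_union := cutrank_union_left_le G X (Z \ X) Y
  rw [Finset.union_sdiff_of_subset hXZ, hZ] at h_union
  have := cutrank_le_card_left G X Y
  have := cutrank_le_card_left G (Z \ X) Y
  have := Finset.card_sdiff_add_card_eq_card hXZ
  omega

theorem cutrank_compl_le_add [Fintype V] (C D : Finset V) :
    cutrank G C Cᶜ ≤ cutrank G C D + cutrank G (C ∪ D) (C ∪ D)ᶜ :=
  calc cutrank G C Cᶜ
      ≤ cutrank G C (D ∪ (C ∪ D)ᶜ) := cutrank_mono G subset_rfl (by grind [Finset.mem_compl])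
    _ ≤ cutrank G C D + cutrank G C (C ∪ D)ᶜ := cutrank_union_right_le ..
    _ ≤ _ := Nat.add_le_add_left (cutrank_mono G Finset.subset_union_left subset_rfl) _

end Cutrank

section Attached

variable {V : Type*} {G : SimpleGraph V} {p : ℕ} {B Z T U X Y : Finset V}

/-- `Z` is attached to `B` with factor `p` if every part `X` of `Z` has at most `p` times as many
vertices as the rank of the cut that separates it from the rest of `B ∪ Z`. -/
def IsAttached (G : SimpleGraph V) (p : ℕ) (B Z : Finset V) : Prop :=
  ∀ X ⊆ Z, X.card ≤ p * cutrank G X ((B ∪ Z) \ X)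

/-- `T` is tight in `S` with factor `p` if it attains equality in the inequality that defines
`IsAttached`, with `S` in the role of `B ∪ Z`. -/
def IsTight (G : SimpleGraph V) (p : ℕ) (S T : Finset V) : Prop :=
  T.card = p * cutrank G T (S \ T)

theorem isAttached_of_cutrank_eq_card (hp : 0 < p) (hdisj : Disjoint B Z)
    (h : cutrank G Z B = Z.card) : IsAttached G p B Z := by
  intro X hX
  have hB : B ⊆ (B ∪ Z) \ X := Finset.subset_sdiff.2
    ⟨Finset.subset_union_left, hdisj.mono_right hX⟩
  calc X.card = cutrank G X B := (cutrank_eq_card_of_subset G h hX).symm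
    _ ≤ cutrank G X ((B ∪ Z) \ X) := cutrank_mono G subset_rfl hB
    _ ≤ p * cutrank G X ((B ∪ Z) \ X) := Nat.le_mul_of_pos_left _ hp

theorem isTight_empty (S : Finset V) : IsTight G p S ∅ := by
  simp [IsTight, cutrank_empty_left]

namespace IsAttached

theorem isTight_union (hZ : IsAttached G p B Z) (hTZ : T ⊆ Z) (hUZ : U ⊆ Z)
    (hT : IsTight G p (B ∪ Z) T) (hU : IsTight G p (B ∪ Z) U) : IsTight G p (B ∪ Z) (T ∪ U) := by
  have h_union := hZ (T ∪ U) (Finset.union_subset hTZ hUZ)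
  have h_inter := hZ (T ∩ U) (Finset.inter_subset_left.trans hTZ)
  have h_sub := Nat.mul_le_mul_left p <|
    cutrank_inter_union_add_le G T ((B ∪ Z) \ T) U ((B ∪ Z) \ U)
  rw [← Finset.sdiff_inter_distrib_right, ← Finset.sdiff_union_distrib, Nat.mul_add,
    Nat.mul_add] at h_sub
  have := Finset.card_union_add_card_inter T U
  unfold IsTight at *
  omega

theorem exists_isTight_of_not_insert (hp : 0 < p) (hZ : IsAttached G p B Z) {v : V}
    (hv : v ∉ B ∪ Z) (h : ¬ IsAttached G p B (insert v Z)) :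
    ∃ U ⊆ Z, IsTight G p (B ∪ Z) U ∧
      cutrank G (insert v U) ((B ∪ Z) \ U) ≤ cutrank G U ((B ∪ Z) \ U) := by
  unfold IsAttached at h
  push Not at h
  obtain ⟨X, hX, hXcard⟩ := h
  have hvX : v ∈ X := by
    by_contra hvX
    have h_mono : cutrank G X ((B ∪ Z) \ X) ≤ cutrank G X ((B ∪ insert v Z) \ X) :=
      cutrank_mono G subset_rfl (by grind)
    have := hZ X ((Finset.subset_insert_iff_of_notMem hvX).1 hX)
    have := Nat.mul_le_mul_left p h_mono
    omega
  obtain ⟨U, hvU, rfl⟩ : ∃ U, v ∉ U ∧ insert v U = X :=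
    ⟨X.erase v, X.notMem_erase v, Finset.insert_erase hvX⟩
  have hUZ : U ⊆ Z := (Finset.insert_subset_insert_iff hvU).1 hX
  have h_sdiff : (B ∪ insert v Z) \ insert v U = (B ∪ Z) \ U := by grind
  rw [h_sdiff, Finset.card_insert_of_notMem hvU] at hXcard
  have h_mono : cutrank G U ((B ∪ Z) \ U) ≤ cutrank G (insert v U) ((B ∪ Z) \ U) :=
    cutrank_mono G (U.subset_insert v) subset_rfl
  have := hZ U hUZ
  have := Nat.mul_le_mul_left p h_mono
  exact ⟨U, hUZ, by unfold IsTight; omega, Nat.le_of_mul_le_mul_left (by omega) hp⟩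

theorem exists_isTight_forall_subset (hZ : IsAttached G p B Z) :
    ∃ T ⊆ Z, IsTight G p (B ∪ Z) T ∧ ∀ U ⊆ Z, IsTight G p (B ∪ Z) U → U ⊆ T := by
  obtain ⟨T, hT, hmax⟩ := (Z.powerset.filter (IsTight G p (B ∪ Z))).exists_max_image Finset.card
    ⟨∅, by simp [isTight_empty]⟩
  simp only [Finset.mem_filter, Finset.mem_powerset] at hT hmax
  refine ⟨T, hT.1, hT.2, fun U hUZ hU ↦ ?_⟩
  have := hmax (T ∪ U) ⟨Finset.union_subset hT.1 hUZ, hZ.isTight_union hT.1 hUZ hT.2 hU⟩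
  exact Finset.union_eq_left.1 (Finset.eq_of_subset_of_card_le Finset.subset_union_left this).symm

theorem card_inter_le (hZ : IsAttached G p B Z) (hXY : B ∪ Z ⊆ X ∪ Y) :
    (X ∩ Z).card ≤ p * (cutrank G X Y + cutrank G (X ∩ Z) (X ∩ B)) := by
  refine (hZ (X ∩ Z) Finset.inter_subset_right).trans (Nat.mul_le_mul_left p ?_)
  calc cutrank G (X ∩ Z) ((B ∪ Z) \ (X ∩ Z))
      ≤ cutrank G (X ∩ Z) (Y ∪ X ∩ B) := cutrank_mono G subset_rfl (by grind)
    _ ≤ cutrank G (X ∩ Z) Y + cutrank G (X ∩ Z) (X ∩ B) := cutrank_union_right_le ..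
    _ ≤ cutrank G X Y + cutrank G (X ∩ Z) (X ∩ B) :=
      Nat.add_le_add_right (cutrank_mono G Finset.inter_subset_left subset_rfl) _

variable [Fintype V]

theorem exists_mul_cutrank_compl_le (hp : 0 < p) (hZB : Z ⊆ Bᶜ) (hZ : IsAttached G p B Z)
    (hmax : ∀ v ∉ B ∪ Z, ¬ IsAttached G p B (insert v Z)) :
    ∃ B', B ⊆ B' ∧ B' ⊆ B ∪ Z ∧ p * cutrank G B' B'ᶜ ≤ Z.card := by
  obtain ⟨T, hTZ, hT, hTmax⟩ := hZ.exists_isTight_forall_subset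
  -- Uncrossing `T` with the obstruction to inserting `v`: no outside vertex raises the rank of `T`.
  have h_closed : ∀ v ∈ (B ∪ Z)ᶜ,
      cutrank G (insert v T) ((B ∪ Z) \ T) ≤ cutrank G T ((B ∪ Z) \ T) := by
    intro v hv
    rw [Finset.mem_compl] at hv
    obtain ⟨U, hUZ, hU, hUv⟩ := hZ.exists_isTight_of_not_insert hp hv (hmax v hv)
    have hUT := hTmax U hUZ hU
    have := cutrank_insert_add_le G hUT (Finset.sdiff_subset_sdiff (subset_refl (B ∪ Z)) hUT) v
    omega
  have hBT : B ⊆ (B ∪ Z) \ T := Finset.subset_sdiff.2 ⟨Finset.subset_union_left,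
    Finset.disjoint_left.2 fun _ hb hbT ↦ Finset.mem_compl.1 (hZB (hTZ hbT)) hb⟩
  refine ⟨(B ∪ Z) \ T, hBT, Finset.sdiff_subset, ?_⟩
  calc p * cutrank G ((B ∪ Z) \ T) ((B ∪ Z) \ T)ᶜ
      = p * cutrank G (T ∪ (B ∪ Z)ᶜ) ((B ∪ Z) \ T) := by
        rw [cutrank_comm, compl_sdiff, himp_eq, Finset.sup_eq_union]
    _ ≤ p * cutrank G T ((B ∪ Z) \ T) :=
        Nat.mul_le_mul_left p (cutrank_union_le_of_forall_insert_le G h_closed)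
    _ = T.card := hT.symm
    _ ≤ Z.card := Finset.card_le_card hTZ

end IsAttached

variable [Fintype V]

theorem exists_isAttached_lt_card {s : ℕ} (hp : 0 < p)
    (hs : ∀ B', B ⊆ B' → cutrank G B' B'ᶜ ≤ s → B.card + p * s < B'.card) :
    ∃ Z ⊆ Bᶜ, IsAttached G p B Z ∧ p * s < Z.card ∧ cutrank G Z B = cutrank G Bᶜ B := by
  obtain ⟨Z₀, hZ₀B, hZ₀card, hZ₀⟩ := exists_subset_cutrank_eq_card G Bᶜ B
  obtain ⟨Z, hZ, hmax⟩ :=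
    (Finset.univ.filter fun Z ↦ Z₀ ⊆ Z ∧ Z ⊆ Bᶜ ∧ IsAttached G p B Z).exists_max_image Finset.card
      ⟨Z₀, by simp [hZ₀B, isAttached_of_cutrank_eq_card hp
        (disjoint_compl_right.mono_right hZ₀B) hZ₀card]⟩
  simp only [Finset.mem_filter, Finset.mem_univ, true_and] at hZ hmax
  obtain ⟨hZ₀Z, hZB, hZ⟩ := hZ
  refine ⟨Z, hZB, hZ, ?_, (cutrank_mono G hZB subset_rfl).antisymm
    (hZ₀ ▸ cutrank_mono G hZ₀Z subset_rfl)⟩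
  have h_insert : ∀ v ∉ B ∪ Z, ¬ IsAttached G p B (insert v Z) := by
    intro v hv hvZ
    rw [Finset.mem_union, not_or] at hv
    have := hmax (insert v Z) ⟨hZ₀Z.trans (Z.subset_insert v),
      Finset.insert_subset (Finset.mem_compl.2 hv.1) hZB, hvZ⟩
    rw [Finset.card_insert_of_notMem hv.2] at this
    omega
  by_contra! hZs
  obtain ⟨B', hBB', hB'Z, hB'⟩ := hZ.exists_mul_cutrank_compl_le hp hZB h_insert
  have := hs B' hBB' (Nat.le_of_mul_le_mul_left (hB'.trans hZs) hp)
  have := (Finset.card_le_card hB'Z).trans (Finset.card_union_le B Z)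
  omega

theorem cutrank_inter_compl_add_le (hZB : Z ⊆ Bᶜ) (hZ : cutrank G Z B = cutrank G Bᶜ B)
    (hXY : B ∪ Z ⊆ X ∪ Y) :
    cutrank G (Y ∩ B) (Y ∩ B)ᶜ + cutrank G (X ∩ Z) (X ∩ B) ≤
      cutrank G B Bᶜ + 2 * cutrank G X Y := by
  obtain ⟨hBXY, hZXY⟩ := Finset.union_subset_iff.1 hXY
  have h_uncross : cutrank G (Y ∩ B) (Y ∩ B)ᶜ + cutrank G B Z ≤
      cutrank G (Y ∩ B) (X ∩ B ∪ Z) + cutrank G B Bᶜ :=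
    (add_le_add (cutrank_mono G (by grind) (by grind [Finset.mem_compl]))
        (cutrank_mono G (by grind) (by grind [Finset.mem_compl]))).trans
      (cutrank_inter_union_add_le G (Y ∩ B) (X ∩ B ∪ Z) B Bᶜ)
  have h_split : cutrank G (Y ∩ B) (X ∩ B ∪ Z) ≤ cutrank G X Y + cutrank G (Y ∩ Z) (Y ∩ B) :=
    calc cutrank G (Y ∩ B) (X ∩ B ∪ Z)
        ≤ cutrank G (Y ∩ B) (X ∪ Y ∩ Z) := cutrank_mono G subset_rfl (by grind)
      _ ≤ cutrank G (Y ∩ B) X + cutrank G (Y ∩ B) (Y ∩ Z) := cutrank_union_right_le ..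
      _ = cutrank G X (Y ∩ B) + cutrank G (Y ∩ Z) (Y ∩ B) := by
        rw [cutrank_comm, cutrank_comm G (Y ∩ B)]
      _ ≤ _ := Nat.add_le_add_right (cutrank_mono G subset_rfl Finset.inter_subset_left) _
  have h_diag : cutrank G (X ∩ Z) (X ∩ B) + cutrank G (Y ∩ Z) (Y ∩ B) ≤
      cutrank G Bᶜ B + cutrank G X Y :=
    (cutrank_add_cutrank_le_union_add G (X ∩ Z) (Y ∩ Z) (X ∩ B) (Y ∩ B)).trans
      (add_le_add (cutrank_mono G (by grind) (by grind)) (cutrank_mono G (by grind) (by grind)))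
  rw [cutrank_comm G B Z, hZ, cutrank_comm G Bᶜ] at h_uncross
  rw [cutrank_comm G Bᶜ] at h_diag
  omega

theorem IsAttached.cutrank_inter_compl_lt {r : ℕ} (hZ : IsAttached G p B Z) (hZB : Z ⊆ Bᶜ)
    (hZ_rank : cutrank G Z B = cutrank G Bᶜ B) (hpZ : p * (12 * r) < Z.card)
    (hBZ : 8 * B.card ≤ Z.card) (hXY : IsBalancedPartitionOf (B ∪ Z) X Y)
    (hr : cutrank G X Y < r) : cutrank G (Y ∩ B) (Y ∩ B)ᶜ < cutrank G B Bᶜ := by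
  obtain ⟨h_union, h_disj, -, hY⟩ := hXY
  have hXBZ : X ⊆ B ∪ Z := h_union ▸ Finset.subset_union_left
  have hX : X.card ≤ (X ∩ Z).card + B.card :=
    (Finset.card_le_card (by grind)).trans (Finset.card_union_le (X ∩ Z) B)
  have hcard := Finset.card_union_of_disjoint h_disj
  rw [h_union, Finset.card_union_of_disjoint (disjoint_compl_right.mono_right hZB)] at hcard
  rw [Finset.card_union_of_disjoint (disjoint_compl_right.mono_right hZB)] at hY
  have hXZ : p * (3 * r) < (X ∩ Z).card := by
    rw [show p * (12 * r) = 4 * (p * (3 * r)) by ring] at hpZ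
    omega
  have := Nat.lt_of_mul_lt_mul_left (hXZ.trans_le (hZ.card_inter_le h_union.ge))
  have := cutrank_inter_compl_add_le hZB hZ_rank h_union.ge
  omega

end Attached

section WellLinked

theorem IsBalancedPartitionOf.symm {V : Type*} {S X Y : Finset V}
    (h : IsBalancedPartitionOf S X Y) : IsBalancedPartitionOf S Y X :=
  ⟨(Y.union_comm X).trans h.1, h.2.1.symm, h.2.2.2, h.2.2.1⟩

theorem exists_isBalancedPartitionOf_cutrank_lt {V : Type*} {G : SimpleGraph V} {S : Finset V}
    {r : ℕ} (hS : 2 ≤ S.card) (h : minBalCutrank G S < r) :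
    ∃ X Y, IsBalancedPartitionOf S X Y ∧ cutrank G X Y < r := by
  obtain ⟨X, hXS, hX⟩ := S.exists_subset_card_eq (Nat.div_le_self S.card 2)
  have := Finset.card_sdiff_add_card_eq_card hXS
  have h_half : IsBalancedPartitionOf S X (S \ X) :=
    ⟨Finset.union_sdiff_of_subset hXS, Finset.disjoint_sdiff, by omega, by omega⟩
  obtain ⟨X, Y, hXY, hrank⟩ := Nat.sInf_mem (s := {k | ∃ X Y : Finset V,
    IsBalancedPartitionOf S X Y ∧ cutrank G X Y = k}) ⟨_, X, S \ X, h_half, rfl⟩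
  exact ⟨X, Y, hXY, hrank ▸ h⟩

variable {V : Type*} [Fintype V] {G : SimpleGraph V} {W B : Finset V} {k t r : ℕ}

/-- `W` is well-linked (Oum–Seymour) if no cut of rank less than both `|W ∩ Z|` and `|W \ Z|`
separates `W ∩ Z` from `W \ Z`. -/
def IsWellLinked (G : SimpleGraph V) (W : Finset V) : Prop :=
  ∀ Z : Finset V, (W ∩ Z).card ≤ cutrank G Z Zᶜ ∨ (W \ Z).card ≤ cutrank G Z Zᶜ

/-- `B` is a big side of a cut of rank at most `t`, where big means missing fewer than `k` elements
of `W`. For well-linked `W` and suitable `k`, `t` exactly one side of every such cut is big, as in a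
tangle. -/
def IsBigSide (G : SimpleGraph V) (W : Finset V) (k t : ℕ) (B : Finset V) : Prop :=
  (W \ B).card < k ∧ cutrank G B Bᶜ ≤ t

theorem IsWellLinked.card_sdiff_lt_or (hW : IsWellLinked G W) (hk : 3 * k ≤ W.card)
    {C D : Finset V} (hCD : (W \ (C ∪ D)).card < k)
    (h : cutrank G C D + cutrank G (C ∪ D) (C ∪ D)ᶜ < k) :
    (W \ C).card < k ∨ (W \ D).card < k := by
  by_contra! hcon
  have hC := cutrank_compl_le_add G C D
  have hD := cutrank_compl_le_add G D C
  rw [cutrank_comm G D C, Finset.union_comm D C] at hD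
  have hcover : W ⊆ W ∩ C ∪ W ∩ D ∪ W \ (C ∪ D) := by grind
  have := (Finset.card_le_card hcover).trans (Finset.card_union_le _ _)
  have := Finset.card_union_le (W ∩ C) (W ∩ D)
  have := hW C
  have := hW D
  omega

theorem isBigSide_univ (hk : 0 < k) : IsBigSide G W k t Finset.univ := by
  constructor
  · rwa [Finset.sdiff_eq_empty_iff_subset.2 W.subset_univ]
  · simp [cutrank_comm G Finset.univ, cutrank_empty_left]

theorem IsBigSide.two_le_card (hB : IsBigSide G W k t B) (hk : 3 * k ≤ W.card) : 2 ≤ B.card := by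
  have := Finset.card_le_card_sdiff_add_card (s := W) (t := B)
  have := hB.1
  omega

theorem IsBigSide.exists_three_mul_card_le (hB : IsBigSide G W k t B) (hW : IsWellLinked G W)
    (hk : 3 * k ≤ W.card) (ht : t + r ≤ k) (hr : ∀ S, minBalCutrank G S < r) :
    ∃ B', IsBigSide G W k (t + r) B' ∧ 3 * B'.card ≤ 2 * B.card := by
  obtain ⟨X, Y, ⟨rfl, -, hX, hY⟩, hXY⟩ :=
    exists_isBalancedPartitionOf_cutrank_lt (hB.two_le_card hk) (hr B)
  obtain ⟨hB_card, hB_rank⟩ := hB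
  have hX_rank := cutrank_compl_le_add G X Y
  have hY_rank := cutrank_compl_le_add G Y X
  rw [cutrank_comm G Y X, Finset.union_comm Y X] at hY_rank
  rcases hW.card_sdiff_lt_or hk hB_card (by omega) with hWX | hWY
  · exact ⟨X, ⟨hWX, by omega⟩, hX⟩
  · exact ⟨Y, ⟨hWY, by omega⟩, hY⟩

theorem IsBigSide.exists_three_pow_mul_card_le (hB : IsBigSide G W k t B) (hW : IsWellLinked G W)
    (hk : 3 * k ≤ W.card) (hr : ∀ S, minBalCutrank G S < r) (n : ℕ) (ht : t + n * r ≤ k) :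
    ∃ B', IsBigSide G W k (t + n * r) B' ∧ 3 ^ n * B'.card ≤ 2 ^ n * B.card := by
  induction n with
  | zero => exact ⟨B, by simpa using hB, by simp⟩
  | succ n ih =>
    rw [Nat.add_mul, Nat.one_mul, ← Nat.add_assoc] at ht ⊢
    obtain ⟨C, hC, hCB⟩ := ih (by omega)
    obtain ⟨D, hD, hDC⟩ := hC.exists_three_mul_card_le hW hk ht hr
    refine ⟨D, hD, ?_⟩
    calc 3 ^ (n + 1) * D.card = 3 ^ n * (3 * D.card) := by ring
      _ ≤ 3 ^ n * (2 * C.card) := Nat.mul_le_mul_left _ hDC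
      _ = 2 * (3 ^ n * C.card) := by ring
      _ ≤ 2 * (2 ^ n * B.card) := Nat.mul_le_mul_left _ hCB
      _ = 2 ^ (n + 1) * B.card := by ring

theorem exists_le_mul_le_add (a : ℕ) {m : ℕ} (hm : 0 < m) : ∃ p, a ≤ p * m ∧ p * m ≤ a + m :=
  ⟨a / m + 1, (Nat.lt_mul_of_div_lt (Nat.lt_succ_self _) hm).le, by
    have := Nat.div_mul_le_self a m
    rw [Nat.add_mul]
    omega⟩

-- `18 * r + r = 19 * r` lets a big side for cuts of rank `18 * r` be split `r`-cheaply; from rank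
-- `12 * r` up to `18 * r` six such splittings are possible, and `11 < (3 / 2) ^ 6`.
theorem IsWellLinked.exists_minimalFor_isBigSide (hW : IsWellLinked G W) (hk : 57 * r ≤ W.card)
    (h_lt : ∀ S, minBalCutrank G S < r) :
    ∃ B, MinimalFor (IsBigSide G W (19 * r) (18 * r)) Finset.card B ∧
      ∀ B', IsBigSide G W (19 * r) (12 * r) B' → 11 * B.card < B'.card := by
  have hr_pos : 0 < r := Nat.zero_lt_of_lt (h_lt ∅)
  obtain ⟨B, hB, hB_min⟩ := exists_minimalFor_of_wellFoundedLT
    (IsBigSide G W (19 * r) (18 * r)) Finset.card ⟨_, isBigSide_univ (by omega)⟩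
  refine ⟨B, ⟨hB, hB_min⟩, fun B' hB' ↦ ?_⟩
  have := hB.two_le_card (by omega)
  obtain ⟨C, hC, hCB'⟩ := hB'.exists_three_pow_mul_card_le hW (by omega) h_lt 6 (by omega)
  have := hB_min ⟨hC.1, hC.2.trans (by omega)⟩
  omega

theorem exists_le_minBalCutrank_of_isWellLinked (hW : IsWellLinked G W) (hr : 57 * r ≤ W.card) :
    ∃ S, r ≤ minBalCutrank G S := by
  by_contra! h_lt
  have hr_pos : 0 < r := Nat.zero_lt_of_lt (h_lt ∅)
  obtain ⟨B, ⟨hB, hB_min⟩, hB_lt⟩ := hW.exists_minimalFor_isBigSide hr h_lt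
  have hB_card : 12 * r < B.card := by
    by_contra! hle
    have := hB_lt B ⟨hB.1, (cutrank_le_card_left G B Bᶜ).trans hle⟩
    omega
  obtain ⟨p, hBp, hpB⟩ := exists_le_mul_le_add (8 * B.card) (m := 12 * r) (by omega)
  have hp : 0 < p := Nat.pos_of_ne_zero (by rintro rfl; omega)
  obtain ⟨Z, hZB, hZ, hpZ, hZ_rank⟩ := exists_isAttached_lt_card hp (s := 12 * r)
    fun B' hBB' hB' ↦ by
      have := hB_lt B' ⟨(Finset.card_le_card (Finset.sdiff_subset_sdiff subset_rfl hBB')).trans_lt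
        hB.1, hB'⟩
      omega
  have h_not_big {X Y : Finset V} (hXY : IsBalancedPartitionOf (B ∪ Z) X Y)
      (hr : cutrank G X Y < r) : ¬ (W \ (Y ∩ B)).card < 19 * r := by
    intro hY
    have h_rank := hZ.cutrank_inter_compl_lt hZB hZ_rank hpZ (by omega) hXY hr
    have h_card := hB_min ⟨hY, h_rank.le.trans hB.2⟩ (Finset.card_le_card Finset.inter_subset_right)
    rw [Finset.eq_of_subset_of_card_le Finset.inter_subset_right h_card] at h_rank
    exact h_rank.false
  obtain ⟨X, Y, hXY, hXY_rank⟩ := exists_isBalancedPartitionOf_cutrank_lt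
    (by have := Finset.card_le_card (Finset.subset_union_left (s₁ := B) (s₂ := Z)); omega)
    (h_lt (B ∪ Z))
  have hB_split : X ∩ B ∪ Y ∩ B = B := by
    rw [← Finset.union_inter_distrib_right, hXY.1, Finset.union_inter_cancel_left]
  have h_rank : cutrank G (X ∩ B) (Y ∩ B) ≤ cutrank G X Y :=
    cutrank_mono G Finset.inter_subset_left Finset.inter_subset_left
  have h_big := hW.card_sdiff_lt_or (C := X ∩ B) (D := Y ∩ B) (k := 19 * r) (by omega)
  rw [hB_split] at h_big
  have := hB.2
  rcases h_big hB.1 (by omega) with hX | hY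
  · exact h_not_big hXY.symm (cutrank_comm G X Y ▸ hXY_rank) hX
  · exact h_not_big hXY hXY_rank hY

end WellLinked

section HasseTree

variable {α : Type*} [PartialOrder α] {a b c d : α}

theorem le_iff_le_of_covBy_of_isChain (h : IsChain (· ≤ ·) (Set.Ici a)) (hab : a ⋖ b)
    (hac : a ≠ c) : a ≤ c ↔ b ≤ c := by
  refine ⟨fun hle ↦ ?_, hab.le.trans⟩
  rcases h.total hab.le hle with hbc | hcb
  · exact hbc
  · exact (hcb.eq_of_not_lt (hab.2 (hle.lt_of_ne hac))).ge

theorem covBy_right_unique_of_isChain (h : IsChain (· ≤ ·) (Set.Ici a)) (hab : a ⋖ b)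
    (hac : a ⋖ c) : b = c :=
  ((le_iff_le_of_covBy_of_isChain h hab hac.ne).1 hac.le).antisymm
    ((le_iff_le_of_covBy_of_isChain h hac hab.ne).1 hab.le)

theorem degree_hasse [Finite α] (a : α) [Fintype ((SimpleGraph.hasse α).neighborSet a)] :
    (SimpleGraph.hasse α).degree a = {c | c ⋖ a}.ncard + {b | a ⋖ b}.ncard := by
  rw [← SimpleGraph.card_neighborSet_eq_degree, ← Nat.card_eq_fintype_card, Nat.card_coe_set_eq,
    add_comm, ← Set.ncard_union_eq]
  · rfl
  · exact Set.disjoint_left.2 fun b hab hba ↦ hab.lt.asymm hba.lt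

theorem reachable_of_le_of_forall_covBy [WellFoundedGT α] [IsStronglyAtomic α] {H : SimpleGraph α}
    (hab : a ≤ b) (hH : ∀ c d, a ≤ c → c ⋖ d → d ≤ b → H.Adj c d) : H.Reachable a b := by
  induction a using WellFoundedGT.induction with
  | ind a ih =>
    rcases hab.eq_or_lt with rfl | hlt
    · rfl
    · obtain ⟨x, hax, hxb⟩ := exists_covBy_le_of_lt hlt
      exact (hH a x le_rfl hax hxb).reachable.trans
        (ih x hax.lt hxb fun c d hxc ↦ hH c d (hax.le.trans hxc))

theorem subsingleton_setOf_covBy_right (h : IsChain (· ≤ ·) (Set.Ici a)) :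
    {b | a ⋖ b}.Subsingleton :=
  fun _ hb _ hc ↦ covBy_right_unique_of_isChain h hb hc

theorem ncard_setOf_covBy_right_eq_one [IsStronglyAtomic α] (h : IsChain (· ≤ ·) (Set.Ici a))
    (hab : a < b) : {b | a ⋖ b}.ncard = 1 := by
  obtain ⟨c, hac, -⟩ := exists_covBy_le_of_lt hab
  exact Set.ncard_eq_one.2 ⟨c, (subsingleton_setOf_covBy_right h).eq_singleton_of_mem hac⟩

section

variable (h : ∀ a : α, IsChain (· ≤ ·) (Set.Ici a))
include h

theorem le_iff_le_of_reachable_deleteEdges (hab : a ⋖ b)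
    (hreach : ((SimpleGraph.hasse α).deleteEdges {s(a, b)}).Reachable c d) : c ≤ a ↔ d ≤ a := by
  have h_covBy {c d : α} (hcd : c ⋖ d) (hne : s(c, d) ≠ s(a, b)) : c ≤ a ↔ d ≤ a := by
    refine le_iff_le_of_covBy_of_isChain (h c) hcd fun hca ↦ hne ?_
    subst hca
    rw [covBy_right_unique_of_isChain (h c) hcd hab]
  obtain ⟨w⟩ := hreach
  induction w with
  | nil => rfl
  | cons hadj _ ih =>
    refine Iff.trans ?_ ih
    obtain ⟨hcov | hcov, hne⟩ := SimpleGraph.deleteEdges_adj.1 hadj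
    · exact h_covBy hcov hne
    · exact (h_covBy hcov (Sym2.eq_swap ▸ hne)).symm

variable [WellFoundedGT α] [IsStronglyAtomic α]

theorem reachable_deleteEdges_covBy_left_iff (hab : a ⋖ b) :
    ((SimpleGraph.hasse α).deleteEdges {s(a, b)}).Reachable c a ↔ c ≤ a := by
  refine ⟨fun hca ↦ (le_iff_le_of_reachable_deleteEdges h hab hca).2 le_rfl, fun hca ↦
    reachable_of_le_of_forall_covBy hca fun x y _ hxy hya ↦ ?_⟩
  refine SimpleGraph.deleteEdges_adj.2 ⟨.inl hxy, fun hmem ↦ ?_⟩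
  rcases Sym2.eq_iff.1 hmem with ⟨-, rfl⟩ | ⟨rfl, -⟩
  · exact hab.lt.not_ge hya
  · exact hab.lt.not_ge (hxy.le.trans hya)

variable [IsDirectedOrder α]

theorem reachable_deleteEdges_covBy_right_iff (hab : a ⋖ b) :
    ((SimpleGraph.hasse α).deleteEdges {s(a, b)}).Reachable c b ↔ ¬c ≤ a := by
  have h_climb {x y : α} (hx : ¬x ≤ a) (hxy : x ≤ y) :
      ((SimpleGraph.hasse α).deleteEdges {s(a, b)}).Reachable x y := by
    refine reachable_of_le_of_forall_covBy hxy fun z w hxz hzw _ ↦ ?_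
    refine SimpleGraph.deleteEdges_adj.2 ⟨.inl hzw, fun hmem ↦ ?_⟩
    rcases Sym2.eq_iff.1 hmem with ⟨rfl, -⟩ | ⟨-, rfl⟩
    · exact hx hxz
    · exact hx (hxz.trans hzw.le)
  refine ⟨fun hcb ↦ ?_, fun hca ↦ ?_⟩
  · rw [le_iff_le_of_reachable_deleteEdges h hab hcb]
    exact hab.lt.not_ge
  · obtain ⟨x, hcx, hbx⟩ := exists_ge_ge c b
    exact (h_climb hca hcx).trans (h_climb hab.lt.not_ge hbx).symm

theorem isTree_hasse_of_isChain [Nonempty α] : (SimpleGraph.hasse α).IsTree := by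
  have h_climb {a b : α} (hab : a ≤ b) : (SimpleGraph.hasse α).Reachable a b :=
    reachable_of_le_of_forall_covBy hab fun _ _ _ hcd _ ↦ .inl hcd
  have h_bridge {a b : α} (hab : a ⋖ b) : (SimpleGraph.hasse α).IsBridge s(a, b) :=
    SimpleGraph.isBridge_iff.2 fun hreach ↦
      (reachable_deleteEdges_covBy_right_iff h hab).1 hreach le_rfl
  refine ⟨{ preconnected := fun a b ↦ ?_ }, SimpleGraph.isAcyclic_iff_forall_adj_isBridge.2 ?_⟩
  · obtain ⟨c, hac, hbc⟩ := exists_ge_ge a b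
    exact (h_climb hac).trans (h_climb hbc).symm
  · rintro a b (hab | hba)
    · exact h_bridge hab
    · exact Sym2.eq_swap ▸ h_bridge hba

end

end HasseTree

section Hierarchy

variable {V : Type*} {P : Finset V} {F : Finset (Finset V)}

/-- `F` is the family of clusters of a binary hierarchical clustering of `P`: a laminar family of
nonempty subsets of `P`, with top `P`, in which every cluster with at least two elements is split
into two others. -/
structure IsBinaryHierarchy (P : Finset V) (F : Finset (Finset V)) : Prop where
  top_mem : P ∈ F
  subset_top : ∀ X ∈ F, X ⊆ P
  nonempty : ∀ X ∈ F, X.Nonempty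
  laminar : ∀ X ∈ F, ∀ Y ∈ F, X ⊆ Y ∨ Y ⊆ X ∨ Disjoint X Y
  exists_split : ∀ X ∈ F, 2 ≤ X.card → ∃ L ∈ F, ∃ R ∈ F, Disjoint L R ∧ L ∪ R = X

namespace IsBinaryHierarchy

theorem singleton (v : V) : IsBinaryHierarchy {v} {{v}} where
  top_mem := by simp
  subset_top := by simp
  nonempty := by simp
  laminar := by simp
  exists_split := by simp

theorem node {P₁ P₂ : Finset V} {F₁ F₂ : Finset (Finset V)} (h_disj : Disjoint P₁ P₂)
    (h₁ : IsBinaryHierarchy P₁ F₁) (h₂ : IsBinaryHierarchy P₂ F₂) :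
    IsBinaryHierarchy (P₁ ∪ P₂) (insert (P₁ ∪ P₂) (F₁ ∪ F₂)) := by
  have h_sub : ∀ X ∈ insert (P₁ ∪ P₂) (F₁ ∪ F₂), X ⊆ P₁ ∪ P₂ := by
    simp only [Finset.mem_insert, Finset.mem_union]
    rintro X (rfl | hX | hX)
    · rfl
    · exact (h₁.subset_top X hX).trans Finset.subset_union_left
    · exact (h₂.subset_top X hX).trans Finset.subset_union_right
  have h_disj' : ∀ X ∈ F₁, ∀ Y ∈ F₂, Disjoint X Y := fun X hX Y hY ↦
    h_disj.mono (h₁.subset_top X hX) (h₂.subset_top Y hY)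
  refine ⟨by simp, h_sub, ?_, fun X hX Y hY ↦ ?_, ?_⟩
  · simp only [Finset.mem_insert, Finset.mem_union]
    rintro X (rfl | hX | hX)
    · exact (h₁.nonempty P₁ h₁.top_mem).mono Finset.subset_union_left
    · exact h₁.nonempty X hX
    · exact h₂.nonempty X hX
  · have hXP := h_sub X hX
    have hYP := h_sub Y hY
    simp only [Finset.mem_insert, Finset.mem_union] at hX hY
    rcases hX with rfl | hX | hX <;> rcases hY with rfl | hY | hY
    all_goals first | exact .inl hXP | exact .inr (.inl hYP) | skip
    · exact h₁.laminar X hX Y hY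
    · exact .inr (.inr (h_disj' X hX Y hY))
    · exact .inr (.inr (h_disj' Y hY X hX).symm)
    · exact h₂.laminar X hX Y hY
  · simp only [Finset.mem_insert, Finset.mem_union]
    rintro X (rfl | hX | hX) hcard
    · exact ⟨P₁, by simp [h₁.top_mem], P₂, by simp [h₂.top_mem], h_disj, rfl⟩
    · obtain ⟨L, hL, R, hR, hLR⟩ := h₁.exists_split X hX hcard
      exact ⟨L, by simp [hL], R, by simp [hR], hLR⟩
    · obtain ⟨L, hL, R, hR, hLR⟩ := h₂.exists_split X hX hcard
      exact ⟨L, by simp [hL], R, by simp [hR], hLR⟩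

theorem exists_of_forall_exists_split {p : Finset V → Prop}
    (h_split : ∀ P, p P → 2 ≤ P.card → ∃ P₁ P₂ : Finset V,
      P₁.Nonempty ∧ P₂.Nonempty ∧ Disjoint P₁ P₂ ∧ P₁ ∪ P₂ = P ∧ p P₁ ∧ p P₂)
    (P : Finset V) (hP : P.Nonempty) (hpP : p P) :
    ∃ F, IsBinaryHierarchy P F ∧ ∀ X ∈ F, p X := by
  induction P using Finset.strongInduction with
  | H P ih =>
    rcases Nat.lt_or_ge P.card 2 with hcard | hcard
    · obtain ⟨v, rfl⟩ := Finset.card_eq_one.1 (le_antisymm (Nat.le_of_lt_succ hcard) hP.card_pos)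
      exact ⟨{{v}}, singleton v, by simpa using hpP⟩
    · obtain ⟨P₁, P₂, hP₁, hP₂, h_disj, rfl, hpP₁, hpP₂⟩ := h_split P hpP hcard
      have hlt₁ : P₁ < P₁ ⊔ P₂ := left_lt_sup.2 fun h ↦ hP₂.ne_empty (h_disj.symm.eq_bot_of_le h)
      have hlt₂ : P₂ < P₁ ⊔ P₂ := right_lt_sup.2 fun h ↦ hP₁.ne_empty (h_disj.eq_bot_of_le h)
      obtain ⟨F₁, hF₁, hpF₁⟩ := ih P₁ hlt₁ hP₁ hpP₁
      obtain ⟨F₂, hF₂, hpF₂⟩ := ih P₂ hlt₂ hP₂ hpP₂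
      refine ⟨_, hF₁.node h_disj hF₂, ?_⟩
      simp only [Finset.mem_insert, Finset.mem_union]
      rintro X (rfl | hX | hX)
      · exact hpP
      · exact hpF₁ X hX
      · exact hpF₂ X hX

theorem singleton_mem (h : IsBinaryHierarchy P F) {v : V} (hv : v ∈ P) : {v} ∈ F := by
  obtain ⟨X, ⟨hXF, hvX⟩, hmin⟩ := exists_minimalFor_of_wellFoundedLT
    (fun X ↦ X ∈ F ∧ v ∈ X) Finset.card ⟨P, h.top_mem, hv⟩
  suffices X.card ≤ 1 by
    rwa [← Finset.eq_singleton_iff_unique_mem.2 ⟨hvX, fun w hw ↦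
      Finset.card_le_one.1 this w hw v hvX⟩]
  by_contra! hcard
  obtain ⟨L, hL, R, hR, h_disj, rfl⟩ := h.exists_split X hXF hcard
  have := Finset.card_union_of_disjoint h_disj
  have := (h.nonempty L hL).card_pos
  have := (h.nonempty R hR).card_pos
  rcases Finset.mem_union.1 hvX with hv | hv
  · have := hmin ⟨hL, hv⟩
    omega
  · have := hmin ⟨hR, hv⟩
    omega

theorem isChain_Ici (h : IsBinaryHierarchy P F) (X : F) : IsChain (· ≤ ·) (Set.Ici X) := by
  intro Y hXY Z hXZ _
  obtain ⟨v, hv⟩ := h.nonempty X X.2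
  rcases h.laminar Y Y.2 Z Z.2 with hYZ | hZY | h_disj
  · exact .inl hYZ
  · exact .inr hZY
  · exact absurd (hXZ hv) (Finset.disjoint_left.1 h_disj (hXY hv))

theorem le_or_le_of_lt (h : IsBinaryHierarchy P F) {X Y L R : F} (hX : L.1 ∪ R.1 = X.1)
    (hYX : Y < X) : Y ≤ L ∨ Y ≤ R := by
  have hY : Y.1 ⊆ L.1 ∪ R.1 := hX ▸ hYX.le
  rcases h.laminar Y Y.2 L L.2 with hYL | hLY | hYL
  · exact .inl hYL
  · rcases h.laminar Y Y.2 R R.2 with hYR | hRY | hYR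
    · exact .inr hYR
    · exact absurd (hX.ge.trans (Finset.union_subset hLY hRY)) hYX.not_ge
    · exact .inl (hYR.left_le_of_le_sup_right hY)
  · exact .inr (hYL.left_le_of_le_sup_left hY)

theorem covBy_of_disjoint (h : IsBinaryHierarchy P F) {X L R : F} (h_disj : Disjoint L.1 R.1)
    (hX : L.1 ∪ R.1 = X.1) : L ⋖ X := by
  have hR := (h.nonempty R R.2).ne_empty
  have hLX : L.1 ≤ X.1 := hX ▸ Finset.subset_union_left
  refine ⟨lt_of_le_of_ne hLX ?_, fun Y hLY hYX ↦ ?_⟩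
  · rintro rfl
    exact hR (h_disj.symm.eq_bot_of_le (hX ▸ Finset.subset_union_right))
  · rcases h.le_or_le_of_lt hX hYX with hYL | hYR
    · exact hLY.not_ge hYL
    · exact (h.nonempty L L.2).ne_empty (h_disj.eq_bot_of_le (hLY.le.trans hYR))

theorem setOf_covBy_eq (h : IsBinaryHierarchy P F) {X L R : F} (h_disj : Disjoint L.1 R.1)
    (hX : L.1 ∪ R.1 = X.1) : {Y | Y ⋖ X} = {L, R} := by
  have hL := h.covBy_of_disjoint h_disj hX
  have hR := h.covBy_of_disjoint h_disj.symm ((Finset.union_comm R.1 L.1).trans hX)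
  ext Y
  refine ⟨fun hY ↦ ?_, by rintro (rfl | rfl) <;> assumption⟩
  exact (h.le_or_le_of_lt hX hY.lt).imp (fun hYL ↦ hYL.eq_of_not_lt fun hlt ↦ hY.2 hlt hL.lt)
    (fun hYR ↦ hYR.eq_of_not_lt fun hlt ↦ hY.2 hlt hR.lt)

theorem isDirectedOrder (h : IsBinaryHierarchy P F) : IsDirectedOrder F :=
  ⟨fun X Y ↦ ⟨⟨P, h.top_mem⟩, h.subset_top X X.2, h.subset_top Y Y.2⟩⟩

theorem ncard_setOf_covBy_of_two_le_card (h : IsBinaryHierarchy P F) {X : F}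
    (hX : 2 ≤ X.1.card) : {Y | Y ⋖ X}.ncard = 2 := by
  obtain ⟨L, hL, R, hR, h_disj, h_union⟩ := h.exists_split X X.2 hX
  rw [h.setOf_covBy_eq (L := ⟨L, hL⟩) (R := ⟨R, hR⟩) h_disj h_union]
  refine Set.ncard_pair fun hLR ↦ (h.nonempty L hL).ne_empty ?_
  rw [Subtype.mk.injEq] at hLR
  exact disjoint_self.1 (hLR ▸ h_disj)

theorem ncard_setOf_covBy_of_card_eq_one (h : IsBinaryHierarchy P F) {X : F}
    (hX : X.1.card = 1) : {Y | Y ⋖ X}.ncard = 0 := by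
  suffices {Y | Y ⋖ X} = ∅ by rw [this, Set.ncard_empty]
  refine Set.eq_empty_of_forall_notMem fun Y (hYX : Y ⋖ X) ↦ ?_
  have := Finset.card_lt_card hYX.lt
  have := (h.nonempty Y Y.2).card_pos
  omega

theorem degree_hasse_le_three (h : IsBinaryHierarchy P F) (X : F)
    [Fintype ((SimpleGraph.hasse F).neighborSet X)] : (SimpleGraph.hasse F).degree X ≤ 3 := by
  rw [degree_hasse]
  have := Set.ncard_le_one_iff_subsingleton.2 (subsingleton_setOf_covBy_right (h.isChain_Ici X))
  have := (h.nonempty X X.2).card_pos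
  rcases Nat.lt_or_ge X.1.card 2 with hX | hX
  · have := h.ncard_setOf_covBy_of_card_eq_one (X := X) (by omega)
    omega
  · have := h.ncard_setOf_covBy_of_two_le_card hX
    omega

theorem degree_hasse_eq_one_iff (h : IsBinaryHierarchy P F) (hP : 2 ≤ P.card) (X : F)
    [Fintype ((SimpleGraph.hasse F).neighborSet X)] :
    (SimpleGraph.hasse F).degree X = 1 ↔ X.1.card = 1 := by
  rw [degree_hasse]
  refine ⟨fun hdeg ↦ ?_, fun hX ↦ ?_⟩
  · by_contra hX
    have := (h.nonempty X X.2).card_pos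
    have := h.ncard_setOf_covBy_of_two_le_card (X := X) (by omega)
    omega
  · have hXP : X < ⟨P, h.top_mem⟩ := lt_of_le_not_ge (h.subset_top X X.2) fun hPX ↦
      (hP.trans (Finset.card_le_card hPX)).not_gt (by omega)
    rw [h.ncard_setOf_covBy_of_card_eq_one hX,
      ncard_setOf_covBy_right_eq_one (h.isChain_Ici X) hXP]

end IsBinaryHierarchy

end Hierarchy

section Splitting

variable {V : Type*} [Fintype V] {G : SimpleGraph V} {M : ℕ} {P Q W : Finset V}

theorem cutrank_inter_compl_lt_of_lt_card_sdiff (hWP : W ⊆ Pᶜ) (hW : cutrank G W P = W.card)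
    (hQ : cutrank G Q Qᶜ < (W \ Q).card) :
    cutrank G (P ∩ Q) (P ∩ Q)ᶜ < cutrank G P Pᶜ := by
  have h_submod := cutrank_inter_union_add_le G P Pᶜ Q Qᶜ
  rw [← Finset.compl_inter] at h_submod
  have h_sdiff : (W \ Q).card ≤ cutrank G (P ∪ Q) (Pᶜ ∩ Qᶜ) :=
    calc (W \ Q).card
        = cutrank G P (W \ Q) := by
          rw [cutrank_comm, cutrank_eq_card_of_subset G hW Finset.sdiff_subset]
      _ ≤ _ := cutrank_mono G Finset.subset_union_left (by grind [Finset.mem_compl])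
  omega

theorem exists_split_of_cutrank_lt (hP : 2 ≤ P.card) (hlt : cutrank G P Pᶜ < M) :
    ∃ P₁ P₂ : Finset V, P₁.Nonempty ∧ P₂.Nonempty ∧ Disjoint P₁ P₂ ∧ P₁ ∪ P₂ = P ∧
      cutrank G P₁ P₁ᶜ ≤ M ∧ cutrank G P₂ P₂ᶜ ≤ M := by
  obtain ⟨v, hv⟩ : P.Nonempty := Finset.card_pos.1 (by omega)
  have h_union : {v} ∪ P \ {v} = P := Finset.union_sdiff_of_subset (by simpa using hv)
  have h_compl := cutrank_compl_le_add G (P \ {v}) {v}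
  have h_col := cutrank_le_card_left G {v} (P \ {v})
  rw [Finset.union_comm, h_union, cutrank_comm G _ {v}] at h_compl
  refine ⟨{v}, P \ {v}, Finset.singleton_nonempty v, ?_, Finset.disjoint_sdiff, h_union,
    (cutrank_le_card_left G {v} _).trans ?_, ?_⟩
  · rw [← Finset.card_pos, Finset.card_sdiff_of_subset (by simpa using hv), Finset.card_singleton]
    omega
  · rw [Finset.card_singleton]
    omega
  · rw [Finset.card_singleton] at h_col
    omega

theorem exists_split_of_not_isWellLinked
    (h : ∀ W : Finset V, W.card = cutrank G P Pᶜ → ¬IsWellLinked G W) :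
    ∃ P₁ P₂ : Finset V, P₁.Nonempty ∧ P₂.Nonempty ∧ Disjoint P₁ P₂ ∧ P₁ ∪ P₂ = P ∧
      cutrank G P₁ P₁ᶜ < cutrank G P Pᶜ ∧ cutrank G P₂ P₂ᶜ < cutrank G P Pᶜ := by
  obtain ⟨W, hWP, hW, hWrank⟩ := exists_subset_cutrank_eq_card G Pᶜ P
  have hWcard : W.card = cutrank G P Pᶜ := by rw [← hW, hWrank, cutrank_comm]
  obtain ⟨Q, hQ⟩ := not_forall.1 (h W hWcard)
  rw [not_or, not_le, not_le] at hQ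
  have hlt₁ : cutrank G (P ∩ Q) (P ∩ Q)ᶜ < cutrank G P Pᶜ :=
    cutrank_inter_compl_lt_of_lt_card_sdiff hWP hW hQ.2
  have hlt₂ : cutrank G (P ∩ Qᶜ) (P ∩ Qᶜ)ᶜ < cutrank G P Pᶜ := by
    refine cutrank_inter_compl_lt_of_lt_card_sdiff hWP hW ?_
    rw [compl_compl, cutrank_comm, sdiff_compl, Finset.inf_eq_inter]
    exact hQ.1
  have h_union : P ∩ Q ∪ P ∩ Qᶜ = P := by
    rw [← Finset.inter_union_distrib_left, Finset.union_compl, Finset.inter_univ]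
  refine ⟨P ∩ Q, P ∩ Qᶜ, Finset.nonempty_iff_ne_empty.2 fun h_empty ↦ ?_,
    Finset.nonempty_iff_ne_empty.2 fun h_empty ↦ ?_,
    disjoint_compl_right.mono Finset.inter_subset_right Finset.inter_subset_right,
    h_union, hlt₁, hlt₂⟩
  · rw [h_empty, Finset.empty_union] at h_union
    exact hlt₂.ne (by rw [h_union])
  · rw [h_empty, Finset.union_empty] at h_union
    exact hlt₁.ne (by rw [h_union])

theorem exists_isBinaryHierarchy_univ_of_not_isWellLinked [Nonempty V]
    (h : ∀ W : Finset V, W.card = M → ¬IsWellLinked G W) :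
    ∃ F, IsBinaryHierarchy (Finset.univ : Finset V) F ∧ ∀ X ∈ F, cutrank G X Xᶜ ≤ M := by
  refine IsBinaryHierarchy.exists_of_forall_exists_split (fun P hPM hP ↦ ?_) Finset.univ
    Finset.univ_nonempty ?_
  · rcases hPM.lt_or_eq with hlt | rfl
    · exact exists_split_of_cutrank_lt hP hlt
    · obtain ⟨P₁, P₂, h₁, h₂, h_disj, h_union, hlt₁, hlt₂⟩ := exists_split_of_not_isWellLinked h
      exact ⟨P₁, P₂, h₁, h₂, h_disj, h_union, hlt₁.le, hlt₂.le⟩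
  · rw [Finset.compl_univ, cutrank_comm, cutrank_empty_left]
    exact M.zero_le

end Splitting

section RankDecomp

theorem reachable_deleteEdges_iff {α β : Type*} {T : SimpleGraph α} {T' : SimpleGraph β}
    (e : T ≃g T') {u v x : α} : (T'.deleteEdges {s(e u, e v)}).Reachable (e x) (e u) ↔
      (T.deleteEdges {s(u, v)}).Reachable x u :=
  let φ : T.deleteEdges {s(u, v)} ≃g T'.deleteEdges {s(e u, e v)} :=
    { e.toEquiv with
      map_rel_iff' := by simp [SimpleGraph.deleteEdges_adj, e.map_adj_iff] }
  φ.reachable_iff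

variable {V : Type*} [Fintype V]

theorem exists_rankDecomp_iso {α : Type*} [Fintype α] {T : SimpleGraph α} (hT : T.IsTree)
    (h_subcubic : ∀ a, T.degree a ≤ 3) {leaf : V → α} (h_inj : Function.Injective leaf)
    (h_leaf : ∀ a, T.degree a = 1 ↔ a ∈ Set.range leaf) :
    ∃ (d : RankDecomp V) (e : T ≃g d.tree), ∀ v, d.leaf v = e (leaf v) := by
  let e := T.overFinIso rfl
  refine ⟨{ n := Fintype.card α
            tree := T.overFin rfl
            isTree := e.isTree_iff.1 hT
            subcubic := fun t ↦ ?_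
            leaf := e ∘ leaf
            leafDeg := fun v ↦ ?_
            leafInj := e.injective.comp h_inj
            leafSurj := fun t ht ↦ ?_ }, e, fun v ↦ rfl⟩
  · obtain ⟨a, rfl⟩ := e.surjective t
    exact (e.degree_eq a).trans_le (h_subcubic a)
  · exact (e.degree_eq (leaf v)).trans ((h_leaf _).2 ⟨v, rfl⟩)
  · obtain ⟨a, rfl⟩ := e.surjective t
    obtain ⟨v, hv⟩ := (h_leaf a).1 ((e.degree_eq a).symm.trans ht)
    exact ⟨v, congrArg e hv⟩

variable {G : SimpleGraph V} {M : ℕ} {F : Finset (Finset V)}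

theorem IsBinaryHierarchy.exists_rankDecomp_widthLE (hV : 2 ≤ Fintype.card V)
    (h : IsBinaryHierarchy Finset.univ F) (hF : ∀ X ∈ F, cutrank G X Xᶜ ≤ M) :
    ∃ d : RankDecomp V, RankDecomp.widthLE G d M := by
  have : Nonempty F := ⟨Finset.univ, h.top_mem⟩
  have : IsDirectedOrder F := h.isDirectedOrder
  obtain ⟨d, e, hd⟩ := exists_rankDecomp_iso (isTree_hasse_of_isChain h.isChain_Ici)
    (fun X ↦ h.degree_hasse_le_three X) (leaf := fun v ↦ ⟨{v}, h.singleton_mem (Finset.mem_univ v)⟩)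
    (fun v w hvw ↦ Finset.singleton_injective (congrArg Subtype.val hvw))
    (fun X ↦ by
      rw [h.degree_hasse_eq_one_iff hV, Finset.card_eq_one]
      exact exists_congr fun v ↦ ⟨fun hX ↦ Subtype.ext hX.symm, fun hX ↦ hX ▸ rfl⟩)
  have h_side {X Y : F} (hXY : X ⋖ Y) : d.side (e X) (e Y) = X ∧ d.side (e Y) (e X) = X.1ᶜ := by
    constructor <;> ext v <;>
      rw [RankDecomp.side, Finset.mem_filter_univ, hd, reachable_deleteEdges_iff]
    · rw [reachable_deleteEdges_covBy_left_iff h.isChain_Ici hXY]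
      exact Finset.singleton_subset_iff
    · rw [Sym2.eq_swap, reachable_deleteEdges_covBy_right_iff h.isChain_Ici hXY, Finset.mem_compl]
      exact Finset.singleton_subset_iff.not
  refine ⟨d, fun u v huv ↦ ?_⟩
  obtain ⟨X, rfl⟩ := e.surjective u
  obtain ⟨Y, rfl⟩ := e.surjective v
  rcases e.map_adj_iff.1 huv with hXY | hYX
  · rw [(h_side hXY).1, (h_side hXY).2]
    exact hF X X.2
  · rw [(h_side hYX).1, (h_side hYX).2, cutrank_comm]
    exact hF Y Y.2

theorem rankwidth_le_of_isBinaryHierarchy (hV : 2 ≤ Fintype.card V)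
    (h : IsBinaryHierarchy Finset.univ F) (hF : ∀ X ∈ F, cutrank G X Xᶜ ≤ M) :
    rankwidth G ≤ M :=
  Nat.sInf_le (h.exists_rankDecomp_widthLE hV hF)

theorem rankwidth_le_card (G : SimpleGraph V) : rankwidth G ≤ Fintype.card V := by
  rcases Set.eq_empty_or_nonempty {k | ∃ d : RankDecomp V, RankDecomp.widthLE G d k} with
    h_empty | ⟨-, d, -⟩
  · rw [rankwidth, h_empty, Nat.sInf_empty]
    exact Nat.zero_le _
  · exact Nat.sInf_le ⟨d, fun _ _ _ ↦ (cutrank_le_card_left G _ _).trans (Finset.card_le_univ _)⟩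

theorem exists_isWellLinked_of_lt_rankwidth (h : M < rankwidth G) :
    ∃ W, IsWellLinked G W ∧ W.card = M := by
  by_contra! hno
  have hM : M ≠ 0 := fun h_zero ↦ hno ∅ (fun Z ↦ .inl (by simp)) h_zero.symm
  have hV : 2 ≤ Fintype.card V := by
    have := rankwidth_le_card G
    omega
  have : Nonempty V := Fintype.card_pos_iff.1 (by omega)
  obtain ⟨F, hF, hFM⟩ := exists_isBinaryHierarchy_univ_of_not_isWellLinked fun W hW hWl ↦
    hno W hWl hW
  exact h.not_ge (rankwidth_le_of_isBinaryHierarchy hV hF hFM)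

end RankDecomp

theorem rankwidth_ge_implies_induced_min_bal_cutrank_ge_general
    {V : Type*} [Fintype V] (G : SimpleGraph V) (r : ℕ) (hrw : 57 * r < rankwidth G) :
    ∃ S : Finset V, r ≤ minBalCutrank G S := by
  obtain ⟨W, hW, hcard⟩ := exists_isWellLinked_of_lt_rankwidth hrw
  exact exists_le_minBalCutrank_of_isWellLinked hW hcard.ge

/-- If `rankwidth(G) ≥ 72r` with `r ≥ 1`, then `G` has an induced subgraph `H = G[S]`
with `min-bal-cutrank(H) ≥ r`. -/
theorem rankwidth_ge_implies_induced_min_bal_cutrank_ge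
    {V : Type*} [Fintype V] (G : SimpleGraph V) (r : ℕ) (hr : 1 ≤ r)
    (hrw : 72 * r ≤ rankwidth G) :
    ∃ S : Finset V, r ≤ minBalCutrank G S :=
  rankwidth_ge_implies_induced_min_bal_cutrank_ge_general G r (by omega)
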